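/- arXiv:1102.4177 — 2 statements merged into one kernel-verified Lean document; each statement's English description precedes it below -/
import Mathlib

section
/- On the quotient Cac(G) of a pointed connected finite graph, the graph distance of the graph G° (whose edges are pairs at cactus distance 1) coincides with the cactus distance d_Cac. -/
open SimpleGraph

/-- The maximum over all paths from `v` to `v'` of the minimum over vertices `a` on the
path of the graph distance `d_gr(ρ, a)`. -/
noncomputable def cacMaxMin {V : Type*} (G : SimpleGraph V) (ρ v v' : V) : ℕ :=
  sSup {m : ℕ | ∃ w : G.Walk v v', ∀ a ∈ w.support, m ≤ G.dist ρ a}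

/-- The cactus pseudo-distance of the pointed graph `(G, ρ)`. -/
noncomputable def dCac {V : Type*} (G : SimpleGraph V) (ρ v v' : V) : ℕ :=
  G.dist ρ v + G.dist ρ v' - 2 * cacMaxMin G ρ v v'

theorem cac_bdd {V : Type*} (G : SimpleGraph V) (ρ v v' : V) :
    BddAbove {m : ℕ | ∃ w : G.Walk v v', ∀ a ∈ w.support, m ≤ G.dist ρ a} :=
  ⟨G.dist ρ v, fun _ ⟨w, hw⟩ => hw v w.start_mem_support⟩

theorem cac_le {V : Type*} (G : SimpleGraph V) (ρ v v' : V) (m : ℕ) (w : G.Walk v v')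
    (hw : ∀ a ∈ w.support, m ≤ G.dist ρ a) : m ≤ cacMaxMin G ρ v v' :=
  le_csSup (cac_bdd G ρ v v') ⟨w, hw⟩

theorem cac_att {V : Type*} (G : SimpleGraph V) (hG : G.Connected) (ρ v v' : V) :
    ∃ w : G.Walk v v', ∀ a ∈ w.support, cacMaxMin G ρ v v' ≤ G.dist ρ a := by
  have hne : {m : ℕ | ∃ w : G.Walk v v', ∀ a ∈ w.support, m ≤ G.dist ρ a}.Nonempty := by
    obtain ⟨w⟩ := hG.preconnected v v'
    exact ⟨0, w, fun _ _ => Nat.zero_le _⟩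
  exact Nat.sSup_mem hne (cac_bdd G ρ v v')

theorem cac_left {V : Type*} (G : SimpleGraph V) (hG : G.Connected) (ρ v v' : V) :
    cacMaxMin G ρ v v' ≤ G.dist ρ v := by
  obtain ⟨w, hw⟩ := cac_att G hG ρ v v'
  exact hw _ w.start_mem_support

theorem cac_right {V : Type*} (G : SimpleGraph V) (hG : G.Connected) (ρ v v' : V) :
    cacMaxMin G ρ v v' ≤ G.dist ρ v' := by
  obtain ⟨w, hw⟩ := cac_att G hG ρ v v'
  exact hw _ w.end_mem_support

theorem cac_comm {V : Type*} (G : SimpleGraph V) (hG : G.Connected) (ρ v v' : V) :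
    cacMaxMin G ρ v v' = cacMaxMin G ρ v' v := by
  apply le_antisymm
  · obtain ⟨w, hw⟩ := cac_att G hG ρ v v'
    exact cac_le G ρ _ _ _ w.reverse (by simpa using hw)
  · obtain ⟨w, hw⟩ := cac_att G hG ρ v' v
    exact cac_le G ρ _ _ _ w.reverse (by simpa using hw)

theorem cac_trans {V : Type*} (G : SimpleGraph V) (hG : G.Connected) (ρ a b c : V) :
    min (cacMaxMin G ρ a b) (cacMaxMin G ρ b c) ≤ cacMaxMin G ρ a c := by
  obtain ⟨w, hw⟩ := cac_att G hG ρ a b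
  obtain ⟨w', hw'⟩ := cac_att G hG ρ b c
  refine cac_le G ρ _ _ _ (w.append w') ?_
  intro x hx
  rw [Walk.mem_support_append_iff] at hx
  rcases hx with hx | hx
  · exact (min_le_left _ _).trans (hw x hx)
  · exact (min_le_right _ _).trans (hw' x hx)

theorem dCac_comm {V : Type*} (G : SimpleGraph V) (hG : G.Connected) (ρ v v' : V) :
    dCac G ρ v v' = dCac G ρ v' v := by
  unfold dCac
  rw [cac_comm G hG ρ v v', add_comm]

theorem dCac_self {V : Type*} (G : SimpleGraph V) (ρ v : V) :
    dCac G ρ v v = 0 := by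
  have := cac_le G ρ v v (G.dist ρ v) Walk.nil (by simp)
  unfold dCac
  omega

theorem dCac_tri {V : Type*} (G : SimpleGraph V) (hG : G.Connected) (ρ a b c : V) :
    dCac G ρ a c ≤ dCac G ρ a b + dCac G ρ b c := by
  have h1 := cac_left G hG ρ a b
  have h2 := cac_right G hG ρ a b
  have h3 := cac_left G hG ρ b c
  have h4 := cac_right G hG ρ b c
  have h7 := cac_trans G hG ρ a b c
  unfold dCac
  omega

theorem exists_down {V : Type*} (G : SimpleGraph V) (hG : G.Connected) (ρ v : V)
    (h : 0 < G.dist ρ v) :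
    ∃ u, G.dist ρ u + 1 = G.dist ρ v ∧ G.dist ρ u ≤ cacMaxMin G ρ v u := by
  obtain ⟨w, hw⟩ := hG.exists_walk_length_eq_dist v ρ
  rw [SimpleGraph.dist_comm] at hw
  cases w with
  | nil => simp at h
  | @cons _ u _ hadj p =>
    have h1 : G.dist ρ u ≤ p.length := by rw [SimpleGraph.dist_comm]; exact dist_le p
    have h2 : G.dist ρ v ≤ G.dist ρ u + G.dist u v := hG.dist_triangle
    have h3 : G.dist u v = 1 := dist_eq_one_iff_adj.2 hadj.symm
    rw [Walk.length_cons] at hw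
    refine ⟨u, by omega, cac_le G ρ _ _ _ (Walk.cons hadj Walk.nil) ?_⟩
    intro a ha
    simp at ha
    rcases ha with rfl | rfl <;> omega

/-- One step toward the target. -/
theorem dCac_step {V : Type*} (G : SimpleGraph V) (hG : G.Connected) (ρ v v' : V) (k : ℕ)
    (hk : dCac G ρ v v' = k + 1) (h : cacMaxMin G ρ v v' < G.dist ρ v) :
    ∃ u, dCac G ρ v u = 1 ∧ dCac G ρ u v' = k := by
  obtain ⟨u, h1, h2⟩ := exists_down G hG ρ v (by omega)
  have h3 := cac_right G hG ρ v u
  have h4 := cac_trans G hG ρ u v v'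
  have h5 := cac_comm G hG ρ u v
  have h6 : dCac G ρ v u = 1 := by unfold dCac; omega
  have h7 := dCac_tri G hG ρ v u v'
  have h8 := cac_right G hG ρ v v'
  refine ⟨u, h6, ?_⟩
  unfold dCac at *
  omega

theorem exists_chain {V : Type*} (G : SimpleGraph V) (hG : G.Connected) (ρ : V) (n : ℕ) :
    ∀ v v' : V, dCac G ρ v v' = n →
      ∃ x : ℕ → V, dCac G ρ (x 0) v = 0 ∧ dCac G ρ (x n) v' = 0 ∧
        ∀ i < n, dCac G ρ (x i) (x (i + 1)) = 1 := by
  induction n with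
  | zero =>
    intro v v' h
    exact ⟨fun _ => v, dCac_self G ρ v, h, by simp⟩
  | succ k ih =>
    intro v v' h
    by_cases hv : cacMaxMin G ρ v v' < G.dist ρ v
    · obtain ⟨u, h1, h2⟩ := dCac_step G hG ρ v v' k h hv
      obtain ⟨x, hx0, hxn, hx⟩ := ih u v' h2
      refine ⟨fun i => Nat.casesOn i v x, dCac_self G ρ v, hxn, ?_⟩
      intro i hi
      cases i with
      | zero =>
        have a := dCac_tri G hG ρ v u (x 0)
        have b := dCac_tri G hG ρ v (x 0) u
        have c := dCac_comm G hG ρ u (x 0)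
        show dCac G ρ v (x 0) = 1
        omega
      | succ j => exact hx j (by omega)
    · have hv' : cacMaxMin G ρ v' v < G.dist ρ v' := by
        rw [cac_comm G hG]
        have := cac_left G hG ρ v v'
        unfold dCac at h
        omega
      rw [dCac_comm G hG] at h
      obtain ⟨u, h1, h2⟩ := dCac_step G hG ρ v' v k h hv'
      rw [dCac_comm G hG] at h2
      obtain ⟨x, hx0, hxn, hx⟩ := ih v u h2
      refine ⟨fun i => if i ≤ k then x i else v', by simpa using hx0, ?_, ?_⟩
      · simpa using dCac_self G ρ v'
      · intro i hi
        rcases Nat.lt_or_ge i k with hik | hik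
        · have e1 : i ≤ k := by omega
          have e2 : i + 1 ≤ k := by omega
          simpa only [e1, e2, if_true] using hx i hik
        · obtain rfl : i = k := by omega
          have a := dCac_tri G hG ρ (x i) u v'
          have b := dCac_tri G hG ρ u (x i) v'
          have c := dCac_comm G hG ρ u (x i)
          have d := dCac_comm G hG ρ u v'
          have e : dCac G ρ (x i) v' = 1 := by omega
          simpa using e

theorem chain_le {V : Type*} (G : SimpleGraph V) (hG : G.Connected) (ρ : V) (x : ℕ → V) (n : ℕ)
    (h : ∀ i < n, dCac G ρ (x i) (x (i + 1)) = 1) : dCac G ρ (x 0) (x n) ≤ n := by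
  induction n with
  | zero => rw [dCac_self]
  | succ k ih =>
    have a := ih (fun i hi => h i (by omega))
    have b := h k (by omega)
    have c := dCac_tri G hG ρ (x 0) (x k) (x (k + 1))
    omega

/-- On the quotient `Cac(G)`, the graph distance of `G°` (whose edges are pairs of classes
at cactus distance 1) coincides with the cactus distance: `d_Cac(v, v')` equals the minimal
number of steps of a chain of classes joining the class of `v` to the class of `v'`, each
consecutive pair at cactus distance 1. -/
theorem stmt6 {V : Type*} [Fintype V] (G : SimpleGraph V) (hG : G.Connected)
    (ρ v v' : V) :
    dCac G ρ v v' =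
      sInf {n : ℕ | ∃ x : ℕ → V, dCac G ρ (x 0) v = 0 ∧ dCac G ρ (x n) v' = 0 ∧
        ∀ i < n, dCac G ρ (x i) (x (i + 1)) = 1} := by
  have hmem := exists_chain G hG ρ _ v v' rfl
  apply le_antisymm
  · refine le_csInf ⟨_, hmem⟩ ?_
    rintro n ⟨x, h0, hn, hx⟩
    have a := chain_le G hG ρ x n hx
    have b := dCac_tri G hG ρ v (x 0) v'
    have c := dCac_tri G hG ρ (x 0) (x n) v'
    have d := dCac_comm G hG ρ v (x 0)
    omega
  · exact Nat.sInf_le hmem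
end

section
/- If pointed graphs G_n rescaled by positive factors r_n → 0 converge in the Gromov-Hausdorff sense to a pointed compact metric space E, then the rescaled cactuses r_n · Cac(G_n) converge in the Gromov-Hausdorff sense to Kac(E). -/
open SimpleGraph

/-- `E` is a geodesic space: any two points are joined by an isometric path. -/
def IsGeodesicSpace (E : Type*) [MetricSpace E] : Prop :=
  ∀ a b : E, ∃ γ : ℝ → E, γ 0 = a ∧ γ (dist a b) = b ∧
    ∀ s ∈ Set.Icc (0 : ℝ) (dist a b), ∀ t ∈ Set.Icc (0 : ℝ) (dist a b),
      dist (γ s) (γ t) = |s - t|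

/-- The continuous cactus pseudo-distance associated with the pointed space `(E, ρ)`:
`d_Kac(a, b) = d(ρ,a) + d(ρ,b) - 2 sup_γ inf_t d(ρ, γ(t))`, the supremum being over all
continuous curves `γ : [0,1] → E` from `a` to `b`. -/
noncomputable def dKac {E : Type*} [MetricSpace E] (ρ a b : E) : ℝ :=
  dist ρ a + dist ρ b -
    2 * sSup {m : ℝ | ∃ γ : ℝ → E, ContinuousOn γ (Set.Icc 0 1) ∧ γ 0 = a ∧ γ 1 = b ∧
      m = ⨅ t : Set.Icc (0 : ℝ) 1, dist ρ (γ t)}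


/-- A correspondence between the pointed sets `(X, ρ)` and `(Y, ρ')`. -/
def IsCorrespondence {X Y : Type*} (ρ : X) (ρ' : Y) (R : Set (X × Y)) : Prop :=
  (ρ, ρ') ∈ R ∧ (∀ x : X, ∃ y : Y, (x, y) ∈ R) ∧ (∀ y : Y, ∃ x : X, (x, y) ∈ R)

/-- The distortion of a correspondence `R` with respect to the (pseudo-)distances
`dX` and `dY`. -/
noncomputable def distortion {X Y : Type*} (dX : X → X → ℝ) (dY : Y → Y → ℝ)
    (R : Set (X × Y)) : ℝ :=
  sSup {r : ℝ | ∃ p ∈ R, ∃ q ∈ R, r = |dX p.1 q.1 - dY p.2 q.2|}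

/-- The pointed Gromov–Hausdorff distance between the quotient metric spaces of the
pseudo-distances `dX`, `dY`, expressed as half the infimum of distortions of
correspondences containing the pair of base points. -/
noncomputable def ghDistCorr {X Y : Type*} (dX : X → X → ℝ) (dY : Y → Y → ℝ)
    (ρ : X) (ρ' : Y) : ℝ :=
  sInf {D : ℝ | ∃ R : Set (X × Y), IsCorrespondence ρ ρ' R ∧ D = distortion dX dY R} / 2

open Filter Topology

theorem hx_joined_to_curve {E : Type*} [MetricSpace E] (ρ a b : E) (m : ℝ)
    (h : JoinedIn {x | m ≤ dist ρ x} a b) :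
    ∃ γ : ℝ → E, ContinuousOn γ (Set.Icc 0 1) ∧ γ 0 = a ∧ γ 1 = b ∧
      m ≤ ⨅ t : Set.Icc (0 : ℝ) 1, dist ρ (γ t) := by
  obtain ⟨γ, hγ⟩ := h
  refine ⟨γ.extend, γ.continuous_extend.continuousOn, by simp, by simp, ?_⟩
  have : Nonempty (Set.Icc (0:ℝ) 1) := ⟨⟨0, by simp⟩⟩
  refine le_ciInf fun t => ?_
  have := hγ t
  rw [Path.extend_apply _ t.2]
  exact this

theorem hx_curve_to_joined {E : Type*} [MetricSpace E] (ρ a b : E) (γ : ℝ → E)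
    (hc : ContinuousOn γ (Set.Icc 0 1)) (h0 : γ 0 = a) (h1 : γ 1 = b) :
    JoinedIn {x | (⨅ t : Set.Icc (0 : ℝ) 1, dist ρ (γ t)) ≤ dist ρ x} a b := by
  refine JoinedIn.ofLine hc h0 h1 ?_
  rintro _ ⟨t, ht, rfl⟩
  have hb : BddBelow (Set.range fun t : Set.Icc (0 : ℝ) 1 => dist ρ (γ t)) :=
    ⟨0, by rintro _ ⟨t, rfl⟩; exact dist_nonneg⟩
  exact ciInf_le hb ⟨t, ht⟩

theorem hx_dir2 {E : Type*} [MetricSpace E] (ρ : E) {V : Type*} (G : SimpleGraph V) (ρG : V)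
    (r ε : ℝ) (hr : 0 < r) (R : Set (V × E)) (hR : IsCorrespondence ρG ρ R)
    (hd : ∀ p ∈ R, ∀ q ∈ R, |r * (G.dist p.1 q.1 : ℝ) - dist p.2 q.2| ≤ ε)
    (hgeo : ∀ a b : E, JoinedIn {x | dist a x ≤ dist a b} a b) (k : ℕ)
    {v v' : V} (w : G.Walk v v') (hw : ∀ x ∈ w.support, k ≤ G.dist ρG x) :
    ∀ a b, (v, a) ∈ R → (v', b) ∈ R → JoinedIn {x | r * k - 2 * ε - r ≤ dist ρ x} a b := by
  have hloc : ∀ u u' a c, k ≤ G.dist ρG u → G.dist u u' ≤ 1 → (u, a) ∈ R → (u', c) ∈ R →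
      JoinedIn {x | r * k - 2 * ε - r ≤ dist ρ x} a c := by
    intro u u' a c hk h1 hua huc
    refine (hgeo a c).mono fun x hx => ?_
    have e1 := abs_le.1 (hd _ hua _ huc)
    have e2 := abs_le.1 (hd _ hR.1 _ hua)
    simp only [Set.mem_ofPred_eq] at hx e1 e2 ⊢
    have e3 : r * (G.dist u u' : ℝ) ≤ r * 1 :=
      mul_le_mul_of_nonneg_left (by exact_mod_cast h1) hr.le
    have e4 : r * (k : ℝ) ≤ r * (G.dist ρG u : ℝ) :=
      mul_le_mul_of_nonneg_left (by exact_mod_cast hk) hr.le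
    have e5 := dist_triangle ρ x a
    rw [_root_.dist_comm x a] at e5
    linarith
  induction w with
  | nil =>
    intro a b ha hb
    exact hloc _ _ a b (hw _ (by simp)) (by simp) ha hb
  | cons h p ih =>
    intro a b ha hb
    obtain ⟨c, hc⟩ := hR.2.1 _
    refine (hloc _ _ a c (hw _ (by simp)) ?_ ha hc).trans
      (ih (fun x hx => hw x (by simp [hx])) c b hc hb)
    exact (SimpleGraph.dist_eq_one_iff_adj.2 h).le

theorem hx_dir1 {E : Type*} [MetricSpace E] (ρ : E) {V : Type*} (G : SimpleGraph V)
    (hG : G.Connected) (ρG : V)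
    (r ε : ℝ) (hr : 0 < r) (hε : 0 < ε) (R : Set (V × E)) (hR : IsCorrespondence ρG ρ R)
    (hd : ∀ p ∈ R, ∀ q ∈ R, |r * (G.dist p.1 q.1 : ℝ) - dist p.2 q.2| ≤ ε)
    (m : ℝ) {v v' : V} {a b : E} (ha : (v, a) ∈ R) (hb : (v', b) ∈ R)
    (h : JoinedIn {x | m ≤ dist ρ x} a b) :
    ∃ w : G.Walk v v', ∀ x ∈ w.support, m - 3 * ε ≤ r * G.dist ρG x := by
  classical
  obtain ⟨γ, hγ⟩ := h
  have hloc : ∀ u u' c c', (u, c) ∈ R → (u', c') ∈ R → m ≤ dist ρ c → dist c c' < ε →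
      ∃ w : G.Walk u u', ∀ x ∈ w.support, m - 3 * ε ≤ r * G.dist ρG x := by
    intro u u' c c' hc hc' hm hcc
    obtain ⟨w, hw⟩ := hG.exists_walk_length_eq_dist u u'
    refine ⟨w, fun x hx => ?_⟩
    have e1 := abs_le.1 (hd _ hc _ hc')
    have e2 := abs_le.1 (hd _ hR.1 _ hc)
    simp only at e1 e2
    have l1 : G.dist u x ≤ G.dist u u' := by
      rw [← hw]
      exact (SimpleGraph.dist_le (w.takeUntil x hx)).trans (w.length_takeUntil_le_length hx)
    have l2 : G.dist ρG u ≤ G.dist ρG x + G.dist u u' := by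
      have := hG.dist_triangle (u := ρG) (v := x) (w := u)
      rw [SimpleGraph.dist_comm (u := x)] at this
      omega
    have e3 : r * (G.dist ρG u : ℝ) ≤ r * (G.dist ρG x + G.dist u u') :=
      mul_le_mul_of_nonneg_left (by exact_mod_cast l2) hr.le
    linarith
  have key := isPreconnected_univ.induction₂ (α := unitInterval)
    (fun s t => ∀ u u', (u, γ s) ∈ R → (u', γ t) ∈ R →
      ∃ w : G.Walk u u', ∀ x ∈ w.support, m - 3 * ε ≤ r * G.dist ρG x)
    (fun s _ => by
      have hc : ∀ᶠ t in 𝓝[Set.univ] s, dist (γ s) (γ t) < ε := by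
        rw [nhdsWithin_univ]
        have := (γ.continuous.tendsto s).eventually (Metric.ball_mem_nhds (γ s) hε)
        filter_upwards [this] with t ht
        rw [_root_.dist_comm]; exact ht
      filter_upwards [hc] with t ht u u' hu hu'
      exact hloc u u' _ _ hu hu' (hγ s) ht)
    (fun s t z _ _ _ h1 h2 u u' hu hu' => by
      obtain ⟨y, hy⟩ := hR.2.2 (γ t)
      obtain ⟨w1, hw1⟩ := h1 u y hu hy
      obtain ⟨w2, hw2⟩ := h2 y u' hy hu'
      refine ⟨w1.append w2, fun x hx => ?_⟩
      rcases (SimpleGraph.Walk.mem_support_append_iff _ _).1 hx with hx | hx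
      · exact hw1 x hx
      · exact hw2 x hx)
    (fun s t _ _ h1 u u' hu hu' => by
      obtain ⟨w, hw⟩ := h1 u' u hu' hu
      exact ⟨w.reverse, fun x hx => hw x (by simpa using hx)⟩)
    (x := 0) (y := 1) (Set.mem_univ _) (Set.mem_univ _)
  exact key v v' (by simpa using ha) (by simpa using hb)

theorem hx_main {E : Type*} [MetricSpace E] (ρ : E) {V : Type*} (G : SimpleGraph V)
    (hG : G.Connected) (ρG : V)
    (r ε : ℝ) (hr : 0 < r) (hε : 0 < ε) (R : Set (V × E)) (hR : IsCorrespondence ρG ρ R)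
    (hd : ∀ p ∈ R, ∀ q ∈ R, |r * (G.dist p.1 q.1 : ℝ) - dist p.2 q.2| ≤ ε)
    (hgeo : ∀ a b : E, JoinedIn {x | dist a x ≤ dist a b} a b) :
    ∀ p ∈ R, ∀ q ∈ R, |r * (dCac G ρG p.1 q.1 : ℝ) - dKac ρ p.2 q.2| ≤ 8 * ε + 2 * r := by
  rintro ⟨v, a⟩ hp ⟨v', b⟩ hq
  simp only
  have hbdd : ∀ m ∈ {m : ℕ | ∃ w : G.Walk v v', ∀ a ∈ w.support, m ≤ G.dist ρG a},
      m ≤ G.dist ρG v ∧ m ≤ G.dist ρG v' := by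
    rintro m ⟨w, hw⟩
    exact ⟨hw _ (by simp), hw _ (by simp)⟩
  have hba : BddAbove {m : ℕ | ∃ w : G.Walk v v', ∀ a ∈ w.support, m ≤ G.dist ρG a} :=
    ⟨_, fun m hm => (hbdd m hm).1⟩
  have hne : {m : ℕ | ∃ w : G.Walk v v', ∀ a ∈ w.support, m ≤ G.dist ρG a}.Nonempty := by
    obtain ⟨w⟩ := hG.preconnected v v'
    exact ⟨0, w, by simp⟩
  have hmem := Nat.sSup_mem hne hba
  change cacMaxMin G ρG v v' ∈ _ at hmem
  have hle := hbdd _ hmem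
  have hcast : (dCac G ρG v v' : ℝ) =
      G.dist ρG v + G.dist ρG v' - 2 * (cacMaxMin G ρG v v' : ℝ) := by
    unfold dCac
    rw [Nat.cast_sub (by omega)]
    push_cast; ring
  obtain ⟨w, hw⟩ := hmem
  set S : Set ℝ := {m : ℝ | ∃ γ : ℝ → E, ContinuousOn γ (Set.Icc 0 1) ∧ γ 0 = a ∧ γ 1 = b ∧
      m = ⨅ t : Set.Icc (0 : ℝ) 1, dist ρ (γ t)} with hS
  have hSb : BddAbove S := by
    refine ⟨dist ρ a, ?_⟩
    rintro _ ⟨γ, hc, h0, h1, rfl⟩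
    obtain ⟨p, hp⟩ := hx_curve_to_joined ρ a b γ hc h0 h1
    simpa using hp 0
  have hj := hx_dir2 ρ G ρG r ε hr R hR hd hgeo _ w hw a b hp hq
  obtain ⟨γ, hc, h0, h1, hm⟩ := hx_joined_to_curve _ _ _ _ hj
  have hlow : r * (cacMaxMin G ρG v v' : ℝ) - 2 * ε - r ≤ sSup S :=
    hm.trans (le_csSup hSb ⟨γ, hc, h0, h1, rfl⟩)
  have hup : sSup S ≤ r * (cacMaxMin G ρG v v' : ℝ) + 3 * ε := by
    refine csSup_le ⟨_, γ, hc, h0, h1, rfl⟩ ?_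
    rintro _ ⟨γ', hc', h0', h1', rfl⟩
    obtain ⟨w', hw'⟩ := hx_dir1 ρ G hG ρG r ε hr hε R hR hd _ hp hq
      (hx_curve_to_joined ρ a b γ' hc' h0' h1')
    set m := ⨅ t : Set.Icc (0 : ℝ) 1, dist ρ (γ' t)
    have hk : ⌈(m - 3 * ε) / r⌉₊ ≤ cacMaxMin G ρG v v' := by
      refine le_csSup hba ⟨w', fun x hx => ?_⟩
      rw [Nat.ceil_le, div_le_iff₀ hr, mul_comm _ r]
      exact hw' x hx
    have := Nat.ceil_le.1 hk
    rw [div_le_iff₀ hr] at this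
    linarith
  have e1 := abs_le.1 (hd _ hR.1 _ hp)
  have e2 := abs_le.1 (hd _ hR.1 _ hq)
  simp only at e1 e2
  rw [hcast]
  unfold dKac
  rw [← hS, abs_le]
  constructor <;> linarith

theorem hx_dist_getVert {V : Type*} (G : SimpleGraph V) (hG : G.Connected) {u v : V}
    (w : G.Walk u v) (i j : ℕ) : G.dist (w.getVert i) (w.getVert (i + j)) ≤ j := by
  induction j with
  | zero => simp
  | succ j ih =>
    have h := hG.dist_triangle (u := w.getVert i) (v := w.getVert (i + j))
      (w := w.getVert (i + j + 1))
    have : G.dist (w.getVert (i + j)) (w.getVert (i + j + 1)) ≤ 1 := by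
      by_cases hl : i + j < w.length
      · exact (SimpleGraph.dist_eq_one_iff_adj.2 (w.adj_getVert_succ hl)).le
      · rw [w.getVert_of_length_le (by omega), w.getVert_of_length_le (by omega)]
        simp
    rw [← add_assoc]
    omega

theorem hx_geo {E : Type*} [MetricSpace E] [CompactSpace E] (ρ : E)
    {V : ℕ → Type*} (G : ∀ n, SimpleGraph (V n))
    (hconn : ∀ n, (G n).Connected) (ρG : ∀ n, V n)
    (r ε : ℕ → ℝ) (hrpos : ∀ n, 0 < r n)
    (hr0 : Tendsto r atTop (𝓝 0)) (he0 : Tendsto ε atTop (𝓝 0))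
    (R : ∀ n, Set (V n × E)) (hR : ∀ n, IsCorrespondence (ρG n) ρ (R n))
    (hd : ∀ n, ∀ p ∈ R n, ∀ q ∈ R n,
      |r n * ((G n).dist p.1 q.1 : ℝ) - dist p.2 q.2| ≤ ε n) (a b : E) :
    JoinedIn {x | dist a x ≤ dist a b} a b := by
  choose va hva using fun n => (hR n).2.2 a
  choose vb hvb using fun n => (hR n).2.2 b
  choose w hw using fun n => (hconn n).exists_walk_length_eq_dist (va n) (vb n)
  choose pt hpt using fun n => (hR n).2.1
  let f : ℕ → ℝ → E := fun n t => pt n ((w n).getVert ⌊t * (w n).length⌋₊)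
  let U : Ultrafilter ℕ := Ultrafilter.of atTop
  have hU : (U : Filter ℕ) ≤ atTop := Ultrafilter.of_le _
  obtain ⟨g, -, hg⟩ := (isCompact_univ (X := ℝ → E)).ultrafilter_le_nhds (U.map f) (by simp)
  have hg' : ∀ t, Tendsto (fun n => f n t) U (𝓝 (g t)) := tendsto_pi_nhds.1 hg
  have hrU := hr0.mono_left hU
  have heU := he0.mono_left hU
  have hlip : ∀ s t, 0 ≤ s → s ≤ t → dist (g s) (g t) ≤ (t - s) * dist a b := by
    intro s t hs hst
    have hlim : Tendsto (fun n => (t - s) * (dist a b + ε n) + r n + ε n) U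
        (𝓝 ((t - s) * (dist a b + 0) + 0 + 0)) :=
      (((heU.const_add _).const_mul _).add hrU).add heU
    have := le_of_tendsto_of_tendsto' ((hg' s).dist (hg' t)) hlim (fun n => ?_)
    · simpa using this
    · have e1 := abs_le.1 (hd n _ (hva n) _ (hvb n))
      have e2 := abs_le.1 (hd n _ (hpt n ((w n).getVert ⌊s * (w n).length⌋₊)) _
        (hpt n ((w n).getVert ⌊t * (w n).length⌋₊)))
      simp only at e1 e2
      have hfl : ⌊s * (w n).length⌋₊ ≤ ⌊t * ((w n).length : ℝ)⌋₊ :=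
        Nat.floor_le_floor (by gcongr)
      obtain ⟨j, hj⟩ := Nat.exists_eq_add_of_le hfl
      have e3 := hx_dist_getVert (G n) (hconn n) (w n) ⌊s * (w n).length⌋₊ j
      rw [← hj] at e3
      have e4 : (j : ℝ) ≤ (t - s) * (w n).length + 1 := by
        have h1 := Nat.lt_floor_add_one (s * ((w n).length : ℝ))
        have h2 := Nat.floor_le (a := t * ((w n).length : ℝ))
          (mul_nonneg (hs.trans hst) (Nat.cast_nonneg _))
        rw [hj] at h2
        push_cast at h2
        linarith
      have e5 : r n * ((G n).dist ((w n).getVert ⌊s * (w n).length⌋₊)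
          ((w n).getVert ⌊t * (w n).length⌋₊) : ℝ) ≤ r n * ((t - s) * (w n).length + 1) :=
        mul_le_mul_of_nonneg_left (le_trans (by exact_mod_cast e3) e4) (hrpos n).le
      have e6 : (t - s) * (r n * ((w n).length : ℝ)) ≤ (t - s) * (dist a b + ε n) := by
        refine mul_le_mul_of_nonneg_left ?_ (by linarith)
        rw [hw]; linarith
      change dist (pt n _) (pt n _) ≤ _
      linarith
  have hend : ∀ (t : ℝ) (c : E) (u : ∀ n, V n), (∀ n, (u n, c) ∈ R n) →
      (∀ n, (w n).getVert ⌊t * (w n).length⌋₊ = u n) → g t = c := by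
    intro t c u hu huw
    have h1 : Tendsto (fun n => dist (f n t) c) U (𝓝 (dist (g t) c)) :=
      (hg' t).dist tendsto_const_nhds
    have := le_of_tendsto_of_tendsto' h1 heU (fun n => by
      have e2 := abs_le.1 (hd n _ (hpt n ((w n).getVert ⌊t * (w n).length⌋₊)) _ (hu n))
      simp only [huw, SimpleGraph.dist_self] at e2
      change dist (pt n _) c ≤ _
      rw [huw]
      simp at e2
      linarith)
    exact dist_le_zero.1 this
  have hg0 : g 0 = a := hend 0 a va hva (by simp)
  have hg1 : g 1 = b := hend 1 b vb hvb (by simp)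
  refine JoinedIn.ofLine (f := g) ?_ hg0 hg1 ?_
  · have : LipschitzOnWith (nndist a b) g (Set.Icc 0 1) := by
      refine LipschitzOnWith.of_dist_le_mul fun s hs t ht => ?_
      rw [coe_nndist, mul_comm, Real.dist_eq]
      rcases le_total s t with h | h
      · rw [abs_sub_comm, abs_of_nonneg (by linarith)]
        exact hlip s t hs.1 h
      · rw [_root_.dist_comm, abs_of_nonneg (by linarith)]
        exact hlip t s ht.1 h
    exact this.continuousOn
  · rintro _ ⟨t, ht, rfl⟩
    have := hlip 0 t le_rfl ht.1
    rw [hg0] at this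
    have h2 : (t - 0) * dist a b ≤ 1 * dist a b :=
      mul_le_mul_of_nonneg_right (by linarith [ht.2]) dist_nonneg
    simp only [Set.mem_ofPred_eq]
    linarith

theorem hx_distortion_nonneg {X Y : Type*} (dX : X → X → ℝ) (dY : Y → Y → ℝ)
    (R : Set (X × Y)) : 0 ≤ distortion dX dY R := by
  refine Real.sSup_nonneg ?_
  rintro _ ⟨p, _, q, _, rfl⟩
  exact abs_nonneg _

theorem hx_gh_nonneg {X Y : Type*} (dX : X → X → ℝ) (dY : Y → Y → ℝ) (ρ : X) (ρ' : Y) :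
    0 ≤ ghDistCorr dX dY ρ ρ' := by
  refine div_nonneg (Real.sInf_nonneg ?_) (by norm_num)
  rintro _ ⟨R, _, rfl⟩
  exact hx_distortion_nonneg _ _ _

theorem hx_gh_le {X Y : Type*} (dX : X → X → ℝ) (dY : Y → Y → ℝ) (ρ : X) (ρ' : Y)
    (R : Set (X × Y)) (hR : IsCorrespondence ρ ρ' R) (D : ℝ) (hD : 0 ≤ D)
    (h : ∀ p ∈ R, ∀ q ∈ R, |dX p.1 q.1 - dY p.2 q.2| ≤ D) :
    ghDistCorr dX dY ρ ρ' ≤ D / 2 := by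
  refine div_le_div_of_nonneg_right ?_ (by norm_num)
  have hb : BddBelow {D : ℝ | ∃ R : Set (X × Y), IsCorrespondence ρ ρ' R ∧
      D = distortion dX dY R} := by
    refine ⟨0, ?_⟩
    rintro _ ⟨R, _, rfl⟩
    exact hx_distortion_nonneg _ _ _
  refine (csInf_le hb ⟨R, hR, rfl⟩).trans (Real.sSup_le ?_ hD)
  · rintro _ ⟨p, hp, q, hq, rfl⟩
    exact h p hp q hq

theorem hx_gh_exists {X Y : Type*} (dX : X → X → ℝ) (dY : Y → Y → ℝ) (ρ : X) (ρ' : Y)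
    (B : ℝ) (hB : ∀ x x' y y', |dX x x' - dY y y'| ≤ B) (δ : ℝ) (hδ : 0 < δ) :
    ∃ R : Set (X × Y), IsCorrespondence ρ ρ' R ∧
      ∀ p ∈ R, ∀ q ∈ R, |dX p.1 q.1 - dY p.2 q.2| ≤ 2 * ghDistCorr dX dY ρ ρ' + δ := by
  have hne : {D : ℝ | ∃ R : Set (X × Y), IsCorrespondence ρ ρ' R ∧
      D = distortion dX dY R}.Nonempty :=
    ⟨_, Set.univ, ⟨trivial, fun _ => ⟨ρ', trivial⟩, fun _ => ⟨ρ, trivial⟩⟩, rfl⟩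
  obtain ⟨_, ⟨R, hR, rfl⟩, hlt⟩ := exists_lt_of_csInf_lt hne (lt_add_of_pos_right _ hδ)
  refine ⟨R, hR, fun p hp q hq => ?_⟩
  have h1 : |dX p.1 q.1 - dY p.2 q.2| ≤ distortion dX dY R := by
    refine le_csSup ⟨B, ?_⟩ ⟨p, hp, q, hq, rfl⟩
    rintro _ ⟨p, hp, q, hq, rfl⟩
    exact hB _ _ _ _
  unfold ghDistCorr
  linarith

/-- If the pointed graphs `G n`, rescaled by `r n → 0`, converge to the pointed compact
metric space `E` in the Gromov–Hausdorff sense, then the rescaled cactuses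
`r n • Cac(G n)` converge to `Kac(E)` in the Gromov–Hausdorff sense (Gromov–Hausdorff
distances are expressed via correspondences, cactuses via their pseudo-distances). -/
theorem stmt10 {E : Type*} [MetricSpace E] [CompactSpace E] (ρ : E)
    {V : ℕ → Type*} [∀ n, Fintype (V n)] (G : ∀ n, SimpleGraph (V n))
    (hconn : ∀ n, (G n).Connected) (ρG : ∀ n, V n)
    (r : ℕ → ℝ) (hrpos : ∀ n, 0 < r n)
    (hr0 : Filter.Tendsto r Filter.atTop (nhds 0))
    (hGH : Filter.Tendsto
      (fun n => ghDistCorr (fun v v' : V n => r n * ((G n).dist v v' : ℝ))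
        (fun a b : E => dist a b) (ρG n) ρ) Filter.atTop (nhds 0)) :
    Filter.Tendsto
      (fun n => ghDistCorr (fun v v' : V n => r n * (dCac (G n) (ρG n) v v' : ℝ))
        (dKac ρ) (ρG n) ρ) Filter.atTop (nhds 0) := by
  have hex : ∀ n, ∃ R : Set (V n × E), IsCorrespondence (ρG n) ρ R ∧
      ∀ p ∈ R, ∀ q ∈ R, |r n * ((G n).dist p.1 q.1 : ℝ) - dist p.2 q.2| ≤
        2 * ghDistCorr (fun v v' : V n => r n * ((G n).dist v v' : ℝ))
        (fun a b : E => dist a b) (ρG n) ρ + r n := by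
    intro n
    obtain ⟨B, hB⟩ := (Set.finite_range
      (fun z : V n × V n => |r n * ((G n).dist z.1 z.2 : ℝ)|)).bddAbove
    refine hx_gh_exists (fun v v' : V n => r n * ((G n).dist v v' : ℝ))
      (fun a b : E => dist a b) (ρG n) ρ (B + Metric.diam (Set.univ : Set E)) ?_ (r n) (hrpos n)
    intro x x' y y'
    have h1 : |r n * ((G n).dist x x' : ℝ)| ≤ B := hB ⟨(x, x'), rfl⟩
    have h2 : dist y y' ≤ Metric.diam (Set.univ : Set E) :=
      Metric.dist_le_diam_of_mem isCompact_univ.isBounded trivial trivial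
    refine (abs_sub _ _).trans ?_
    rw [abs_of_nonneg (dist_nonneg (x := y) (y := y'))]
    linarith
  choose R hR hd using hex
  set ε : ℕ → ℝ := fun n => 2 * ghDistCorr (fun v v' : V n => r n * ((G n).dist v v' : ℝ))
        (fun a b : E => dist a b) (ρG n) ρ + r n with hε
  have he0 : Tendsto ε atTop (𝓝 0) := by
    have := (hGH.const_mul 2).add hr0
    simpa using this
  have hepos : ∀ n, 0 < ε n := fun n => by
    have := hx_gh_nonneg (fun v v' : V n => r n * ((G n).dist v v' : ℝ))
        (fun a b : E => dist a b) (ρG n) ρ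
    have := hrpos n
    simp only [hε]
    linarith
  have hgeo := hx_geo ρ G hconn ρG r ε hrpos hr0 he0 R hR hd
  have hlim : Tendsto (fun n => (8 * ε n + 2 * r n) / 2) atTop (𝓝 0) := by
    have := ((he0.const_mul 8).add (hr0.const_mul 2)).div_const 2
    simpa using this
  refine squeeze_zero (fun n => hx_gh_nonneg _ _ _ _) (fun n => ?_) hlim
  refine hx_gh_le _ _ _ _ (R n) (hR n) _ ?_ ?_
  · have := hepos n
    have := hrpos n
    linarith
  · exact hx_main ρ (G n) (hconn n) (ρG n) (r n) (ε n) (hrpos n) (hepos n) (R n) (hR n)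
      (hd n) hgeo
end
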